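/- arXiv:2403.04289 — 2 statements merged into one kernel-verified Lean document; each statement's English description precedes it below -/
import Mathlib

section
/- Fix 0 ≤ i ≤ n. Every i-dimensional subspace V of F_q^n is contained in exactly t_i = [(q^i - 1)(q^i - q)···(q^i - q^{i-1}) · (q^n - q^i)···(q^n - q^{n-1})] / (i! (n-i)!) of the families G_B = {span(U) : U ⊆ B}, where B ranges over all (unordered) bases of F_q^n. -/
theorem aux_card_orderings {α : Type*} [Fintype α] [DecidableEq α] (k : ℕ)
    (P : Finset α → Prop) :
    Nat.card {f : Fin k → α // Function.Injective f ∧ P (Finset.univ.image f)} =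
      Nat.card {s : Finset α // s.card = k ∧ P s} * k.factorial := by
  classical
  let φ : (Σ s : {s : Finset α // s.card = k ∧ P s}, (Fin k ≃ s.1)) →
      {f : Fin k → α // Function.Injective f ∧ P (Finset.univ.image f)} := fun p =>
    ⟨fun j => (p.2 j : α), Subtype.val_injective.comp p.2.injective, by
      have : Finset.univ.image (fun j => (p.2 j : α)) = p.1.1 := by
        ext x
        simp only [Finset.mem_image, Finset.mem_univ, true_and]
        constructor
        · rintro ⟨j, rfl⟩
          exact (p.2 j).2
        · intro hx
          exact ⟨p.2.symm ⟨x, hx⟩, by simp⟩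
      rw [this]
      exact p.1.2.2⟩
  have hφ : Function.Bijective φ := by
    constructor
    · rintro ⟨⟨s, hs⟩, e⟩ ⟨⟨t, ht⟩, e'⟩ h
      have h1 : ∀ j, (e j : α) = e' j := fun j => congrFun (congrArg Subtype.val h) j
      have hst : s = t := by
        ext x
        constructor
        · intro hx
          have := h1 (e.symm ⟨x, hx⟩)
          rw [Equiv.apply_symm_apply] at this
          change x = _ at this
          rw [this]
          exact (e' _).2
        · intro hx
          have := h1 (e'.symm ⟨x, hx⟩)
          rw [Equiv.apply_symm_apply] at this
          change _ = x at this
          rw [← this]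
          exact (e _).2
      subst hst
      have : e = e' := by
        ext j
        exact h1 j
      subst this
      rfl
    · rintro ⟨f, hf, hP⟩
      refine ⟨⟨⟨Finset.univ.image f, ?_, hP⟩, Equiv.ofBijective
        (fun j => ⟨f j, Finset.mem_image_of_mem _ (Finset.mem_univ _)⟩) ?_⟩, ?_⟩
      · rw [Finset.card_image_of_injective _ hf]
        simp
      · constructor
        · intro a b hab
          exact hf (congrArg Subtype.val hab)
        · rintro ⟨x, hx⟩
          obtain ⟨j, -, rfl⟩ := Finset.mem_image.1 hx
          exact ⟨j, rfl⟩
      · rfl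
  rw [← Nat.card_eq_of_bijective φ hφ, Nat.card_sigma]
  rw [Finset.sum_congr rfl (g := fun _ => k.factorial), Finset.sum_const, Finset.card_univ,
    Nat.card_eq_fintype_card, smul_eq_mul]
  intro s _
  have e : Fin k ≃ s.1 := (Finset.equivFinOfCardEq s.2.1).symm
  rw [Nat.card_eq_fintype_card, Fintype.card_equiv e, Fintype.card_fin]

theorem aux_card_inner {F W : Type*} [Field F] [Fintype F] [AddCommGroup W] [Module F W]
    [Fintype W] [DecidableEq W] (V : Submodule F W) (i : ℕ) (hV : Module.finrank F V = i) :
    Nat.card {s : Finset W // s.card = i ∧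
        (LinearIndepOn F id (s : Set W) ∧ (s : Set W) ⊆ V)} * i.factorial =
      ∏ j ∈ Finset.range i, (Fintype.card F ^ i - Fintype.card F ^ j) := by
  rw [← aux_card_orderings i (fun s : Finset W => LinearIndepOn F id (s : Set W) ∧ (s : Set W) ⊆ V)]
  have := card_linearIndependent (K := F) (V := V) (k := i) hV.ge
  rw [hV] at this
  rw [Finset.prod_range, ← this]
  symm
  refine Nat.card_eq_of_bijective (fun g => ⟨fun j => (g.1 j : W), ?_, ?_, ?_⟩) ⟨?_, ?_⟩
  · exact Subtype.val_injective.comp g.2.injective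
  · have h : LinearIndependent F (fun j => (g.1 j : W)) := g.2.map' V.subtype V.ker_subtype
    have := (linearIndepOn_id_range_iff h.injective).2 h
    simpa using this
  · intro x hx
    simp only [Finset.coe_image, Finset.coe_univ, Set.image_univ, Set.mem_range] at hx
    obtain ⟨j, rfl⟩ := hx
    exact (g.1 j).2
  · intro a b hab
    apply Subtype.ext
    funext j
    exact Subtype.ext (congrFun (congrArg Subtype.val hab) j)
  · rintro ⟨f, hf, hl, hs⟩
    have hm : ∀ j, f j ∈ V := fun j => hs (by simp)
    refine ⟨⟨fun j => ⟨f j, hm j⟩, ?_⟩, rfl⟩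
    rw [Finset.coe_image, Finset.coe_univ, Set.image_univ, linearIndepOn_id_range_iff hf] at hl
    exact LinearIndependent.of_comp V.subtype hl

theorem aux_card_outer {F W : Type*} [Field F] [Fintype F] [AddCommGroup W] [Module F W]
    [Fintype W] [DecidableEq W] (V : Submodule F W) (i m : ℕ) (hV : Module.finrank F V = i)
    (hW : Module.finrank F W = i + m) :
    Nat.card {s : Finset W // s.card = m ∧ LinearIndepOn F V.mkQ (s : Set W)} * m.factorial =
      ∏ j ∈ Finset.Ico i (i + m), (Fintype.card F ^ (i + m) - Fintype.card F ^ j) := by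
  rw [← aux_card_orderings m (fun s : Finset W => LinearIndepOn F V.mkQ (s : Set W))]
  have hQ : Module.finrank F (W ⧸ V) = m := by
    have := V.finrank_quotient_add_finrank
    omega
  have : Finite (W ⧸ V) := Finite.of_surjective _ V.mkQ_surjective
  have h1 := card_linearIndependent (K := F) (V := W ⧸ V) (k := m) hQ.ge
  rw [hQ] at h1
  have h2 : Nat.card (Fin m → V) = ∏ j : Fin m, Fintype.card F ^ i := by
    rw [Nat.card_fun, Module.natCard_eq_pow_finrank (K := F) (V := V), hV]
    simp
  have h3 : Nat.card ({s : Fin m → W ⧸ V // LinearIndependent F s} × (Fin m → V)) =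
      ∏ j ∈ Finset.Ico i (i + m), (Fintype.card F ^ (i + m) - Fintype.card F ^ j) := by
    rw [Nat.card_prod, h1, h2, ← Finset.prod_mul_distrib, Finset.prod_Ico_eq_prod_range,
      Nat.add_sub_cancel_left, Finset.prod_range]
    refine Finset.prod_congr rfl fun j _ => ?_
    rw [mul_comm, Nat.mul_sub, pow_add, pow_add]
  rw [← h3]
  symm
  obtain ⟨r, hr⟩ := V.mkQ.exists_rightInverse_of_surjective V.range_mkQ
  have hr' : ∀ x, V.mkQ (r x) = x := fun x => LinearMap.congr_fun hr x
  have hv : ∀ x : V, V.mkQ (x : W) = 0 := fun x => by simp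
  have hmk : ∀ (h : Fin m → W ⧸ V) (v : Fin m → V) j, V.mkQ (r (h j) + v j) = h j := by
    intro h v j
    rw [map_add, hr', hv, add_zero]
  refine Nat.card_eq_of_bijective
    (fun p => ⟨fun j => r (p.1.1 j) + (p.2 j : W), ?_, ?_⟩) ⟨?_, ?_⟩
  · intro a b hab
    apply p.1.2.injective
    have := congrArg V.mkQ hab
    simpa only [hmk] using this
  · have hinj : Function.Injective (fun j => r (p.1.1 j) + (p.2 j : W)) := by
      intro a b hab
      apply p.1.2.injective
      have := congrArg V.mkQ hab
      simpa only [hmk] using this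
    rw [Finset.coe_image, Finset.coe_univ, Set.image_univ, linearIndepOn_range_iff hinj]
    have : (V.mkQ ∘ fun j => r (p.1.1 j) + (p.2 j : W)) = p.1.1 := funext fun j => hmk _ _ j
    rw [this]
    exact p.1.2
  · rintro ⟨⟨h, hh⟩, v⟩ ⟨⟨h', hh'⟩, v'⟩ hab
    have h0 : ∀ j, r (h j) + (v j : W) = r (h' j) + v' j :=
      fun j => congrFun (congrArg Subtype.val hab) j
    have e1 : h = h' := by
      funext j
      rw [← hmk h v j, h0, hmk]
    subst e1
    have e2 : v = v' := by
      funext j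
      exact Subtype.ext (add_left_cancel (h0 j))
    rw [e2]
  · rintro ⟨f, hf, hl⟩
    rw [Finset.coe_image, Finset.coe_univ, Set.image_univ, linearIndepOn_range_iff hf] at hl
    refine ⟨⟨⟨V.mkQ ∘ f, hl⟩, fun j => ⟨f j - r (V.mkQ (f j)), ?_⟩⟩, ?_⟩
    · apply (Submodule.Quotient.mk_eq_zero V).1
      rw [← Submodule.mkQ_apply, map_sub, hr', sub_self]
    · apply Subtype.ext
      funext j
      simp

theorem aux_filter {F W : Type*} [Field F] [AddCommGroup W] [Module F W]
    [DecidableEq W] (V : Submodule F W) [DecidablePred (· ∈ V)] (B : Finset W)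
    (hB : LinearIndepOn F id (B : Set W))
    (hU : ∃ U ⊆ B, Submodule.span F (U : Set W) = V) :
    Submodule.span F (B.filter (· ∈ V) : Set W) = V ∧
    (B.filter (· ∈ V)).card = Module.finrank F V ∧
    LinearIndepOn F V.mkQ (B.filter (· ∉ V) : Set W) := by
  obtain ⟨U, hUB, hUV⟩ := hU
  have hs : Submodule.span F (B.filter (· ∈ V) : Set W) = V := by
    apply le_antisymm
    · rw [Submodule.span_le]
      intro x hx
      exact (Finset.mem_filter.1 hx).2
    · conv_lhs => rw [← hUV]
      apply Submodule.span_mono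
      intro x hx
      refine Finset.mem_coe.2 (Finset.mem_filter.2 ⟨hUB hx, ?_⟩)
      rw [← hUV]
      exact Submodule.subset_span hx
  refine ⟨hs, ?_, ?_⟩
  · rw [← finrank_span_finset_eq_card (R := F), hs]
    exact hB.mono (Finset.coe_subset.2 (Finset.filter_subset _ _))
  · have hd : Disjoint (B.filter (· ∈ V) : Set W) (B.filter (· ∉ V) : Set W) :=
      Finset.disjoint_coe.2 (Finset.disjoint_filter_filter_not B B _)
    have hu : (B.filter (· ∈ V) : Set W) ∪ (B.filter (· ∉ V) : Set W) = B := by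
      rw [← Finset.coe_union, Finset.filter_union_filter_not_eq]
    rw [← hu, linearIndepOn_union_iff_quotient hd, Set.image_id, hs] at hB
    exact hB.2


/-- Every `i`-dimensional subspace `V` of `F_q^n` lies in exactly
`t_i = (q^i-1)⋯(q^i-q^{i-1})·(q^n-q^i)⋯(q^n-q^{n-1}) / (i!(n-i)!)` of the
families `G_B = {span(U) : U ⊆ B}`, as `B` ranges over unordered bases of `F_q^n`. -/
theorem card_bases_containing_subspace (F : Type*) [Field F] [Fintype F]
    (n i : ℕ) (hi : i ≤ n) (V : Submodule F (Fin n → F))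
    (hV : Module.finrank F V = i) :
    Nat.card {B : Finset (Fin n → F) //
        B.card = n ∧
        LinearIndependent F (fun x : ↥(B : Set (Fin n → F)) => (x : Fin n → F)) ∧
        ∃ U ⊆ B, Submodule.span F (U : Set (Fin n → F)) = V}
      * (i.factorial * (n - i).factorial) =
      (∏ j ∈ Finset.range i, (Fintype.card F ^ i - Fintype.card F ^ j)) *
        ∏ j ∈ Finset.Ico i n, (Fintype.card F ^ n - Fintype.card F ^ j) := by
  classical
  obtain ⟨m, rfl⟩ := Nat.exists_eq_add_of_le hi
  rw [Nat.add_sub_cancel_left, ← aux_card_inner V i hV,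
    ← aux_card_outer V i m hV (by simp)]
  rw [mul_mul_mul_comm, ← Nat.card_prod]
  congr 1
  refine Nat.card_eq_of_bijective (fun B =>
    (⟨B.1.filter (· ∈ V), ?_, ?_, ?_⟩, ⟨B.1.filter (· ∉ V), ?_, ?_⟩)) ⟨?_, ?_⟩
  · exact (aux_filter V B.1 B.2.2.1 B.2.2.2).2.1.trans hV
  · have hB : LinearIndepOn F id (B.1 : Set (Fin (i + m) → F)) := B.2.2.1
    exact hB.mono (Finset.coe_subset.2 (Finset.filter_subset _ _))
  · intro x hx
    exact (Finset.mem_filter.1 hx).2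
  · have h1 := (aux_filter V B.1 B.2.2.1 B.2.2.2).2.1.trans hV
    have h2 := Finset.card_filter_add_card_filter_not (s := B.1) (· ∈ V)
    have h3 := B.2.1
    omega
  · exact (aux_filter V B.1 B.2.2.1 B.2.2.2).2.2
  · rintro ⟨B, hB⟩ ⟨C, hC⟩ h
    simp only [Prod.mk.injEq, Subtype.mk.injEq] at h
    apply Subtype.ext
    change B = C
    rw [← Finset.filter_union_filter_not_eq (· ∈ V) B, h.1, h.2,
      Finset.filter_union_filter_not_eq]
  · rintro ⟨⟨s, hs, hsl, hsV⟩, ⟨t, ht, htl⟩⟩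
    have htV : ∀ x ∈ t, x ∉ V := by
      intro x hx hxV
      have := htl.ne_zero hx
      simp [hxV] at this
    have hsV' : ∀ x ∈ s, x ∈ V := fun x hx => hsV hx
    have hd : Disjoint s t := Finset.disjoint_left.2 fun x hx hx' => htV x hx' (hsV hx)
    refine ⟨⟨s ∪ t, ?_, ?_, s, Finset.subset_union_left, ?_⟩, ?_⟩
    · rw [Finset.card_union_of_disjoint hd, hs, ht]
    · have := LinearIndepOn.union_id_of_quotient hsV hsl htl
      rw [← Finset.coe_union] at this
      exact this
    · apply Submodule.eq_of_le_of_finrank_eq (Submodule.span_le.2 hsV)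
      rw [finrank_span_finset_eq_card hsl, hs, hV]
    · apply Prod.ext
      · apply Subtype.ext
        ext x
        simp only [Finset.mem_filter, Finset.mem_union]
        grind
      · apply Subtype.ext
        ext x
        simp only [Finset.mem_filter, Finset.mem_union]
        grind
end

section
/- Suppose V is an intersecting k-Sperner family of subspaces of F_q^n with dim(W) ≤ ⌊n/2⌋ for every W ∈ V. Letting V_j = {W ∈ V : dim W = j}, the LYM-type inequality ∑_{j=1}^{⌊n/2⌋} |V_j| / [n-1 choose j-1]_q ≤ k holds. -/
noncomputable def gaussBinom (q n k : ℕ) : ℚ :=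
  ∏ i ∈ Finset.range k, ((q : ℚ) ^ (n - i) - 1) / ((q : ℚ) ^ (k - i) - 1)

noncomputable def qfac (q m : ℕ) : ℚ := ∏ i ∈ Finset.range m, ((q : ℚ) ^ (i + 1) - 1)

noncomputable def gB (q a b : ℕ) : ℚ := qfac q (a + b) / (qfac q a * qfac q b)

lemma qpow_pos {q : ℕ} (hq : 2 ≤ q) {m : ℕ} (hm : 1 ≤ m) : (0:ℚ) < (q:ℚ)^m - 1 := by
  have : (1:ℚ) < q := by exact_mod_cast hq
  have := one_lt_pow₀ this (by omega : m ≠ 0)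
  linarith

lemma qfac_pos {q : ℕ} (hq : 2 ≤ q) (m : ℕ) : 0 < qfac q m :=
  Finset.prod_pos fun i _ => qpow_pos hq (by omega)

lemma qfac_succ (q m : ℕ) : qfac q (m+1) = qfac q m * ((q:ℚ)^(m+1) - 1) :=
  Finset.prod_range_succ _ _

lemma gB_pos {q : ℕ} (hq : 2 ≤ q) (a b : ℕ) : 0 < gB q a b :=
  div_pos (qfac_pos hq _) (mul_pos (qfac_pos hq _) (qfac_pos hq _))

lemma gB_comm (q a b : ℕ) : gB q a b = gB q b a := by
  unfold gB; rw [add_comm, mul_comm]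

lemma gB_zero {q : ℕ} (hq : 2 ≤ q) (b : ℕ) : gB q 0 b = 1 := by
  unfold gB
  have := (qfac_pos hq b).ne'
  simp [qfac] at *
  exact this

lemma gB_succ_left {q : ℕ} (hq : 2 ≤ q) (a b : ℕ) :
    gB q (a+1) b * ((q:ℚ)^(a+1) - 1) = ((q:ℚ)^(a+b+1) - 1) * gB q a b := by
  unfold gB
  have h1 := (qfac_pos hq a).ne'
  have h2 := (qfac_pos hq b).ne'
  have h3 := (qpow_pos hq (show 1 ≤ a+1 by omega)).ne'
  rw [show a+1+b = a+b+1 by ring, qfac_succ, qfac_succ]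
  field_simp

lemma gB_succ_right {q : ℕ} (hq : 2 ≤ q) (a b : ℕ) :
    gB q a (b+1) * ((q:ℚ)^(b+1) - 1) = ((q:ℚ)^(a+b+1) - 1) * gB q a b := by
  rw [gB_comm, gB_succ_left hq, gB_comm, add_comm b a]

lemma gB_ratio {q : ℕ} (hq : 2 ≤ q) (a b : ℕ) :
    gB q (a+1) b * ((q:ℚ)^(a+1) - 1) = gB q a (b+1) * ((q:ℚ)^(b+1) - 1) := by
  rw [gB_succ_left hq, gB_succ_right hq]

lemma gB_pascal {q : ℕ} (hq : 2 ≤ q) (a b : ℕ) :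
    gB q (a+1) (b+1) = (q:ℚ)^(a+1) * gB q (a+1) b + gB q a (b+1) := by
  have h1 := gB_succ_left hq a (b+1)
  have h2 := gB_succ_right hq (a+1) b
  have h3 := (qpow_pos hq (show 1 ≤ a+1+b+1 by omega))
  apply mul_left_cancel₀ h3.ne'
  rw [show a + (b+1) + 1 = a+1+b+1 by ring] at h1
  rw [mul_add, ← h1, mul_left_comm, ← h2]
  ring

lemma gaussBinom_eq {q : ℕ} (hq : 2 ≤ q) (a b : ℕ) : gaussBinom q (a+b) b = gB q a b := by
  induction b with
  | zero => rw [gB_comm, gB_zero hq]; simp [gaussBinom]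
  | succ b ih =>
    have h3 := (qpow_pos hq (show 1 ≤ b+1 by omega))
    apply mul_right_cancel₀ h3.ne'
    rw [gB_succ_right hq, ← ih]
    unfold gaussBinom
    rw [Finset.prod_range_succ']
    have : ∀ i, a + (b+1) - (i+1) = a + b - i := by intro i; omega
    simp only [this, Nat.add_sub_add_right, Nat.sub_zero]
    field_simp
    ring_nf

open Module in
lemma card_sub {F : Type*} [Field F] [Fintype F] {V : Type*} [AddCommGroup V] [Module F V] [Finite V]
    (W : Submodule F V) : Nat.card W = Fintype.card F ^ finrank F W := by
  rw [Module.natCard_eq_pow_finrank (K := F), Nat.card_eq_fintype_card]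

open Module in
lemma card_ann {F : Type*} [Field F] [Fintype F] {V : Type*} [AddCommGroup V] [Module F V] [Finite V]
    [Fintype (Dual F V)] [DecidableEq (Dual F V)] (S : Submodule F V)
    [DecidablePred fun φ : Dual F V => S ≤ LinearMap.ker φ] {c : ℕ} 
    (hc : finrank F S + c = finrank F V) :
    (((Finset.univ.erase (0 : Dual F V)).filter (fun φ => S ≤ LinearMap.ker φ)).card : ℚ)
      = (Fintype.card F : ℚ) ^ c - 1 := by
  have h1 := Subspace.finrank_add_finrank_dualAnnihilator_eq S
  have h2 : finrank F S.dualAnnihilator = c := by omega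
  have h3 := card_sub S.dualAnnihilator
  rw [h2] at h3
  have h4 : (Finset.univ.erase (0 : Dual F V)).filter (fun φ => S ≤ LinearMap.ker φ)
     = (Finset.univ.filter (fun φ : Dual F V => S ≤ LinearMap.ker φ)).erase 0 := by
    ext φ; simp [and_comm]
  have h5 : (Finset.univ.filter (fun φ : Dual F V => S ≤ LinearMap.ker φ)).card 
      = Fintype.card F ^ c := by
    rw [← h3, ← Fintype.card_subtype, ← Nat.card_eq_fintype_card]
    apply Nat.card_congr
    apply Equiv.subtypeEquivRight
    intro φ
    rw [Submodule.mem_dualAnnihilator]; rfl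
  rw [h4, Finset.card_erase_of_mem (by simp), h5, Nat.cast_sub]
  · simp
  · exact Nat.one_le_pow _ _ Fintype.card_pos

open Module in
lemma sum_ann {F : Type*} [Field F] [Fintype F] {V : Type*} [AddCommGroup V] [Module F V] [Finite V]
    [Fintype (Dual F V)] [DecidableEq (Dual F V)]
    [∀ (φ : Dual F V) (S : Submodule F V), Decidable (S ≤ LinearMap.ker φ)] {c j : ℕ} 
    (hc : j + c = finrank F V) (G : Finset (Submodule F V)) (hG : ∀ S ∈ G, finrank F S = j) :
    (∑ φ ∈ Finset.univ.erase (0 : Dual F V), ((G.filter (fun S => S ≤ LinearMap.ker φ)).card : ℚ))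
      = G.card * ((Fintype.card F : ℚ) ^ c - 1) := by
  simp only [Finset.card_filter]
  push_cast
  rw [Finset.sum_comm]
  have : ∀ S ∈ G, (∑ φ ∈ Finset.univ.erase (0 : Dual F V),
      if S ≤ LinearMap.ker φ then (1:ℚ) else 0) = (Fintype.card F : ℚ) ^ c - 1 := by
    intro S hS
    rw [← card_ann S (c := c) (by rw [hG S hS, hc]), Finset.card_filter]
    push_cast
    rfl
  rw [Finset.sum_congr rfl this]
  simp [mul_sub]

/-- restriction of a family to a subspace -/
noncomputable def restr {F : Type*} [Field F] {V : Type*} [AddCommGroup V] [Module F V]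
    (P : Submodule F V) (G : Finset (Submodule F V)) : Finset (Submodule F P) :=
  open Classical in (G.filter (fun S => S ≤ P)).image (Submodule.comap P.subtype)

open Module in
lemma mem_restr {F : Type*} [Field F] {V : Type*} [AddCommGroup V] [Module F V]
    (P : Submodule F V) (G : Finset (Submodule F V)) (A : Submodule F P) :
    A ∈ restr P G ↔ A.map P.subtype ∈ G := by
  classical
  unfold restr
  simp only [Finset.mem_image, Finset.mem_filter]
  constructor
  · rintro ⟨B, ⟨hB, hP⟩, rfl⟩
    rwa [Submodule.map_comap_subtype, inf_eq_right.2 hP]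
  · intro h
    refine ⟨_, ⟨h, Submodule.map_subtype_le P A⟩, ?_⟩
    exact Submodule.comap_map_eq_of_injective P.subtype_injective A

open Module in
lemma card_restr {F : Type*} [Field F] {V : Type*} [AddCommGroup V] [Module F V]
    (P : Submodule F V) (G : Finset (Submodule F V))
    [DecidablePred fun S : Submodule F V => S ≤ P] :
    (restr P G).card = (G.filter (fun S => S ≤ P)).card := by
  classical
  unfold restr
  rw [Finset.card_image_of_injOn]
  · congr
  · intro A hA B hB hAB
    simp only [Finset.coe_filter, Set.mem_ofPred_eq] at hA hB
    have := congrArg (Submodule.map P.subtype) hAB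
    simpa only [Submodule.map_comap_subtype, inf_eq_right.2 hA.2, inf_eq_right.2 hB.2] using this

open Module in
lemma finrank_ker_dual {F : Type*} [Field F] {V : Type*} [AddCommGroup V] [Module F V]
    [FiniteDimensional F V] {φ : Dual F V} (hφ : φ ≠ 0) {n : ℕ} (hn : finrank F V = n + 1) :
    finrank F (LinearMap.ker φ) = n := by
  have := Module.Dual.finrank_ker_add_one_of_ne_zero hφ
  omega

/-- all subspaces of dimension `k` -/
noncomputable def lev (F : Type*) [Field F] (V : Type*) [AddCommGroup V] [Module F V] [Finite V]
    (k : ℕ) : Finset (Submodule F V) :=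
  (Set.toFinite {W : Submodule F V | Module.finrank F W = k}).toFinset

open Module in
lemma mem_lev {F : Type*} [Field F] {V : Type*} [AddCommGroup V] [Module F V] [Finite V]
    {k : ℕ} {W : Submodule F V} : W ∈ lev F V k ↔ finrank F W = k := by
  simp [lev]

open Module in
lemma restr_lev {F : Type*} [Field F] {V : Type*} [AddCommGroup V] [Module F V] [Finite V]
    (P : Submodule F V) (k : ℕ) : restr P (lev F V k) = lev F P k := by
  ext A
  rw [mem_restr, mem_lev, mem_lev, Submodule.finrank_map_subtype_eq]

open Module in
lemma card_lev {F : Type*} [Field F] [Fintype F] (k c : ℕ) {V : Type*} [AddCommGroup V] [Module F V] [Finite V]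
    (hV : finrank F V = c + k) : ((lev F V k).card : ℚ) = gB (Fintype.card F) c k := by
  have hq : 2 ≤ Fintype.card F := Fintype.one_lt_card
  induction c generalizing V with
  | zero =>
    rw [gB_zero hq]
    have : lev F V k = {⊤} := by
      ext A
      rw [mem_lev, Finset.mem_singleton]
      constructor
      · intro h; exact Submodule.eq_top_of_finrank_eq (by omega)
      · rintro rfl; rw [finrank_top]; omega
    simp [this]
  | succ c ih =>
    classical
    have : Finite (Dual F V) := Module.finite_of_finite F
    let := Fintype.ofFinite (Dual F V)
    have h := sum_ann (c := c+1) (j := k) (by omega) (lev F V k) (fun S hS => mem_lev.1 hS)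
    have h2 : ∀ φ ∈ Finset.univ.erase (0 : Dual F V),
      (((lev F V k).filter (fun S => S ≤ LinearMap.ker φ)).card : ℚ) = gB (Fintype.card F) c k := by
      intro φ hφ
      rw [← card_restr, restr_lev]
      apply ih
      exact finrank_ker_dual (Finset.ne_of_mem_erase hφ) (by omega)
    rw [Finset.sum_congr rfl h2] at h
    have h3 := card_ann (⊥ : Submodule F V) (c := c+k+1) (by rw [finrank_bot]; omega)
    simp only [bot_le, Finset.filter_true] at h3
    rw [Finset.sum_const, nsmul_eq_mul, h3, ← gB_succ_left hq] at h
    exact (mul_right_cancel₀ (qpow_pos hq (by omega)).ne' h).symm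

open Module in
lemma card_fib {F : Type*} [Field F] [Fintype F] {V : Type*} [AddCommGroup V] [Module F V] [Finite V]
    {ψ : Dual F V} (hψ : ψ ≠ 0) {n : ℕ} (hn : finrank F V = n + 1) :
    Nat.card {u : V // ψ u = 1} = Fintype.card F ^ n := by
  obtain ⟨v, hv⟩ : ∃ v, ψ v ≠ 0 := by
    by_contra! h; exact hψ (LinearMap.ext h)
  have hu0 : ψ ((ψ v)⁻¹ • v) = 1 := by simp [hv]
  generalize (ψ v)⁻¹ • v = u0 at hu0
  rw [← finrank_ker_dual hψ hn, ← card_sub]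
  refine Nat.card_congr ⟨fun u => ⟨u.1 - u0, by simp [u.2, hu0]⟩, fun w => ⟨w.1 + u0, ?_⟩, ?_, ?_⟩
  · have := w.2
    rw [LinearMap.mem_ker] at this
    simp [this, hu0]
  · intro u; simp
  · intro u; simp

open Module in
lemma cover_count {F : Type*} [Field F] [Fintype F] {V : Type*} [AddCommGroup V] [Module F V] [Finite V]
    {φ : Dual F V} (hφ : φ ≠ 0) {n j : ℕ} (hn : finrank F V = n + 1)
    [∀ (S : Submodule F V), Decidable (S ≤ LinearMap.ker φ)]
    (G H : Finset (Submodule F V)) (hG : ∀ S ∈ G, finrank F S = j)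
    (hH : ∀ S ∈ H, finrank F S = j+1)
    (hGH : ∀ S ∈ G, ∀ A : Submodule F V, S ≤ A → finrank F A = j+1 → A ∈ H) :
    (G.filter (fun S => S ≤ LinearMap.ker φ)).card * Fintype.card F ^ n
     ≤ (H.filter (fun S => ¬ S ≤ LinearMap.ker φ)).card * Fintype.card F ^ j := by
  classical
  let := Fintype.ofFinite V
  have e1 : (Finset.univ.filter (fun u : V => φ u = 1)).card = Fintype.card F ^ n := by
    rw [← card_fib hφ hn, ← Fintype.card_subtype, ← Nat.card_eq_fintype_card]
  have e2 : ∀ A ∈ H.filter (fun S => ¬ S ≤ LinearMap.ker φ),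
      (Finset.univ.filter (fun u : V => u ∈ A ∧ φ u = 1)).card = Fintype.card F ^ j := by
    intro A hA
    rw [Finset.mem_filter] at hA
    have hne : φ.comp A.subtype ≠ 0 := by
      intro h
      apply hA.2
      intro x hx
      have := LinearMap.congr_fun h ⟨x, hx⟩
      simpa using this
    rw [← card_fib hne (hH A hA.1), ← Fintype.card_subtype, ← Nat.card_eq_fintype_card]
    refine Nat.card_congr ⟨fun u => ⟨⟨u.1, u.2.1⟩, u.2.2⟩, fun u => ⟨u.1.1, u.1.2, u.2⟩, ?_, ?_⟩
    · intro u; rfl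
    · intro u; rfl
  have key : ∀ S : Submodule F V, S ≤ LinearMap.ker φ → ∀ u, φ u = 1 →
      (S ⊔ Submodule.span F {u}) ⊓ LinearMap.ker φ = S := by
    intro S hS u hu
    apply le_antisymm
    · intro x hx
      obtain ⟨hx, hx2⟩ := hx
      obtain ⟨s, hs, w, hw, rfl⟩ := Submodule.mem_sup.1 hx
      obtain ⟨a, rfl⟩ := Submodule.mem_span_singleton.1 hw
      have h1 : φ s = 0 := hS hs
      have h2 : φ (s + a • u) = 0 := hx2
      simp [h1, hu] at h2
      simpa [h2] using hs
    · exact le_inf le_sup_left hS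
  rw [← e1, ← Finset.card_product, ← Finset.sum_const_nat e2, ← Finset.card_sigma]
  apply Finset.card_le_card_of_injOn (fun p => ⟨p.1 ⊔ Submodule.span F {p.2}, p.2⟩)
  · rintro ⟨S, u⟩ hp
    simp only [Finset.coe_product, Finset.coe_filter, Set.mem_prod, Set.mem_ofPred_eq, Finset.mem_univ, true_and] at hp
    obtain ⟨⟨hS, hSk⟩, hu⟩ := hp
    have hun : u ∉ S := fun h => by
      have : φ u = 0 := hSk h
      simp [hu] at this
    have hmem : u ∈ S ⊔ Submodule.span F {u} :=
      Submodule.mem_sup_right (Submodule.mem_span_singleton_self u)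
    simp only [Finset.coe_sigma, Set.mem_sigma_iff, Finset.mem_coe, Finset.mem_filter, Finset.mem_univ, true_and]
    refine ⟨⟨hGH S hS _ le_sup_left ?_, ?_⟩, hmem, hu⟩
    · have h1 := Submodule.finrank_sup_add_finrank_inf_eq S (Submodule.span F {u})
      have hu0 : u ≠ 0 := by rintro rfl; simp at hu
      rw [finrank_span_singleton hu0, hG S hS] at h1
      have h2 : S ⊓ Submodule.span F {u} = ⊥ := by
        rw [← disjoint_iff, Submodule.disjoint_span_singleton' hu0]
        exact hun
      rw [h2, finrank_bot] at h1
      omega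
    · intro h
      have : φ u = 0 := h hmem
      simp [hu] at this
  · rintro ⟨S, u⟩ hp ⟨S', u'⟩ hp' h
    simp only [Finset.coe_product, Finset.coe_filter, Set.mem_prod, Set.mem_ofPred_eq, Finset.mem_univ, true_and] at hp hp'
    simp only [Sigma.mk.injEq, heq_eq_eq] at h
    obtain ⟨h1, rfl⟩ := h
    rw [← key S hp.1.2 u hp.2, h1, key S' hp'.1.2 u hp.2]

open Module in
lemma KK_step {F : Type*} [Field F] [Fintype F] (j r : ℕ) {V : Type*} [AddCommGroup V] [Module F V] [Finite V]
    (hn : finrank F V = r + 1 + (j + 1) + 1)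
    (G H : Finset (Submodule F V)) (hG : ∀ S ∈ G, finrank F S = j+1)
    (hH : ∀ S ∈ H, finrank F S = j+1+1)
    (hGH : ∀ S ∈ G, ∀ A : Submodule F V, S ≤ A → finrank F A = j+1+1 → A ∈ H)
    (hcard : (H.card : ℚ) ≤ gB (Fintype.card F) (r+1) (j+1))
    (hsmall : ∀ φ : Dual F V, φ ≠ 0 →
      ((restr (LinearMap.ker φ) H).card : ℚ) < gB (Fintype.card F) r (j+1) →
      ((restr (LinearMap.ker φ) G).card : ℚ) * ((Fintype.card F : ℚ) ^ (r+1) - 1)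
       ≤ (restr (LinearMap.ker φ) H).card * ((Fintype.card F : ℚ) ^ (j+1) - 1)) :
    (G.card : ℚ) * ((Fintype.card F : ℚ) ^ (r+2) - 1) ≤ H.card * ((Fintype.card F : ℚ) ^ (j+1) - 1) := by
  classical
  have hq : 2 ≤ Fintype.card F := Fintype.one_lt_card
  have hq0 : (0:ℚ) < Fintype.card F := by exact_mod_cast Fintype.card_pos
  have : Finite (Dual F V) := Module.finite_of_finite F
  let := Fintype.ofFinite (Dual F V)
  have hall : ∀ φ ∈ Finset.univ.erase (0 : Dual F V),
      ((G.filter (fun S => S ≤ LinearMap.ker φ)).card : ℚ) * ((Fintype.card F : ℚ) ^ (r+1) - 1)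
       ≤ (H.filter (fun S => S ≤ LinearMap.ker φ)).card * ((Fintype.card F : ℚ) ^ (j+1) - 1) := by
    intro φ hφ
    have hφ := Finset.ne_of_mem_erase hφ
    have hs := hsmall φ hφ
    rw [card_restr, card_restr] at hs
    rcases lt_or_ge (((H.filter (fun S => S ≤ LinearMap.ker φ)).card : ℚ)) (gB (Fintype.card F) r (j+1)) with h | h
    · exact hs h
    · have hc := cover_count hφ hn G H hG hH hGH
      have hsplit := Finset.card_filter_add_card_filter_not (s := H) (fun S => S ≤ LinearMap.ker φ)
      have hp := gB_pascal hq r j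
      have hr := gB_ratio hq r j
      have hc' : ((G.filter (fun S => S ≤ LinearMap.ker φ)).card : ℚ) * (Fintype.card F : ℚ) ^ (r + 1 + (j + 1))
        ≤ (H.filter (fun S => ¬ S ≤ LinearMap.ker φ)).card * (Fintype.card F : ℚ) ^ (j + 1) := by
        exact_mod_cast hc
      have hsplit' : ((H.filter (fun S => S ≤ LinearMap.ker φ)).card : ℚ)
        + (H.filter (fun S => ¬ S ≤ LinearMap.ker φ)).card = H.card := by exact_mod_cast hsplit
      rw [pow_add, ← mul_assoc] at hc'
      have hc2 := le_of_mul_le_mul_right hc' (pow_pos hq0 _)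
      have hc3 : ((G.filter (fun S => S ≤ LinearMap.ker φ)).card : ℚ) ≤ gB (Fintype.card F) (r+1) j := by
        apply le_of_mul_le_mul_right _ (pow_pos hq0 (r+1))
        linarith
      calc _ ≤ gB (Fintype.card F) (r+1) j * ((Fintype.card F : ℚ) ^ (r+1) - 1) :=
            mul_le_mul_of_nonneg_right hc3 (qpow_pos hq (by omega)).le
        _ = _ := hr
        _ ≤ _ := mul_le_mul_of_nonneg_right h (qpow_pos hq (by omega)).le
  have hsum := Finset.sum_le_sum hall
  rw [← Finset.sum_mul, ← Finset.sum_mul, sum_ann (c := r+2) (j := j+1) (by omega) G hG,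
    sum_ann (c := r+1) (j := j+1+1) (by omega) H hH] at hsum
  apply le_of_mul_le_mul_right _ (qpow_pos hq (show 1 ≤ r+1 by omega))
  linarith

open Module in
/-- Kruskal-Katona/Lovasz type inequality for upper shadows. -/
lemma KK {F : Type*} [Field F] [Fintype F] (j r : ℕ) {V : Type*} [AddCommGroup V] [Module F V] [Finite V]
    (hn : finrank F V = r + 1 + (j + 1) + 1)
    (G H : Finset (Submodule F V)) (hG : ∀ S ∈ G, finrank F S = j+1)
    (hH : ∀ S ∈ H, finrank F S = j+1+1)
    (hGH : ∀ S ∈ G, ∀ A : Submodule F V, S ≤ A → finrank F A = j+1+1 → A ∈ H)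
    (hcard : (H.card : ℚ) ≤ gB (Fintype.card F) (r+1) (j+1)) :
    (G.card : ℚ) * ((Fintype.card F : ℚ) ^ (r+2) - 1) ≤ H.card * ((Fintype.card F : ℚ) ^ (j+1) - 1) := by
  have hq : 2 ≤ Fintype.card F := Fintype.one_lt_card
  induction r generalizing V with
  | zero =>
    apply KK_step j 0 hn G H hG hH hGH hcard
    intro φ hφ hlt
    rw [gB_zero hq] at hlt
    have h0 : (restr (LinearMap.ker φ) H).card = 0 := by
      have : (restr (LinearMap.ker φ) H).card < 1 := by exact_mod_cast hlt
      omega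
    have h1 : restr (LinearMap.ker φ) G = ∅ := by
      rw [Finset.card_eq_zero] at h0
      rw [Finset.eq_empty_iff_forall_notMem] at h0 ⊢
      intro S hS
      rw [mem_restr] at hS
      apply h0 ⊤
      rw [mem_restr, Submodule.map_subtype_top]
      apply hGH _ hS _ (Submodule.map_subtype_le _ _)
      exact finrank_ker_dual hφ (by omega)
    simp [h0, h1]
  | succ r ih =>
    apply KK_step j (r+1) hn G H hG hH hGH hcard
    intro φ hφ hlt
    have hk := finrank_ker_dual hφ hn
    apply ih (by omega)
    · intro S hS
      rw [mem_restr] at hS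
      rw [← hG _ hS, Submodule.finrank_map_subtype_eq]
    · intro S hS
      rw [mem_restr] at hS
      rw [← hH _ hS, Submodule.finrank_map_subtype_eq]
    · intro S hS A hSA hA
      rw [mem_restr] at hS ⊢
      apply hGH _ hS _ (Submodule.map_mono hSA)
      rw [Submodule.finrank_map_subtype_eq, hA]
    · exact hlt.le

open Module in
lemma exists_equiv_map {F : Type*} [Field F] {V : Type*} [AddCommGroup V] [Module F V]
    [FiniteDimensional F V] (U U' : Submodule F V) (h : finrank F U = finrank F U') :
    ∃ α : V ≃ₗ[F] V, ∀ x, α x ∈ U' ↔ x ∈ U := by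
  obtain ⟨C, hC⟩ := U.exists_isCompl
  obtain ⟨C', hC'⟩ := U'.exists_isCompl
  have h1 := Submodule.finrank_add_eq_of_isCompl hC
  have h2 := Submodule.finrank_add_eq_of_isCompl hC'
  let e1 : U ≃ₗ[F] U' := LinearEquiv.ofFinrankEq _ _ h
  let e2 : C ≃ₗ[F] C' := LinearEquiv.ofFinrankEq _ _ (by omega)
  refine ⟨(Submodule.prodEquivOfIsCompl U C hC).symm ≪≫ₗ (e1.prodCongr e2) ≪≫ₗ
    (Submodule.prodEquivOfIsCompl U' C' hC'), fun x => ?_⟩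
  rw [← Submodule.prodEquivOfIsCompl_symm_apply_snd_eq_zero U' C' hC',
    ← Submodule.prodEquivOfIsCompl_symm_apply_snd_eq_zero U C hC]
  simp

open Module in
lemma avg {F : Type*} [Field F] [Fintype F] {V E : Type*} [AddCommGroup V] [Module F V] [Finite V]
    [AddCommGroup E] [Module F E] [Fintype (V ≃ₗ[F] E)] {k : ℕ} (W : Submodule F E)
    (hW : finrank F W = k) (A : Finset (Submodule F V)) (hA : ∀ S ∈ A, finrank F S = k)
    [DecidablePred fun g : V ≃ₗ[F] E => W.comap (g : V →ₗ[F] E) ∈ A] :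
    A.card * Fintype.card (V ≃ₗ[F] E) = (lev F V k).card *
      (Finset.univ.filter (fun g : V ≃ₗ[F] E => W.comap (g : V →ₗ[F] E) ∈ A)).card := by
  classical
  rcases A.eq_empty_or_nonempty with rfl | ⟨U0, hU0⟩
  · simp
  have hconst : ∀ U : Submodule F V, finrank F U = k →
      (Finset.univ.filter (fun g : V ≃ₗ[F] E => W.comap (g : V →ₗ[F] E) = U)).card =
      (Finset.univ.filter (fun g : V ≃ₗ[F] E => W.comap (g : V →ₗ[F] E) = U0)).card := by
    intro U hU
    obtain ⟨α, hα⟩ := exists_equiv_map U U0 (by rw [hU, hA _ hU0])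
    apply Finset.card_bij' (fun g _ => α.symm ≪≫ₗ g) (fun g _ => α ≪≫ₗ g)
    · intro g hg
      simp only [Finset.mem_filter, Finset.mem_univ, true_and] at hg ⊢
      ext x
      rw [← α.apply_symm_apply x, hα, ← hg]
      simp
    · intro g hg
      simp only [Finset.mem_filter, Finset.mem_univ, true_and] at hg ⊢
      ext x
      rw [← hα, ← hg]
      simp
    · intro g hg; ext x; simp
    · intro g hg; ext x; simp
  generalize (Finset.univ.filter (fun g : V ≃ₗ[F] E => W.comap (g : V →ₗ[F] E) = U0)).card = c at hconst
  have hgen : ∀ B : Finset (Submodule F V), (∀ S ∈ B, finrank F S = k) →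
      (Finset.univ.filter (fun g : V ≃ₗ[F] E => W.comap (g : V →ₗ[F] E) ∈ B)).card = B.card * c := by
    intro B hB
    rw [Finset.card_eq_sum_card_fiberwise (t := B) (f := fun g : V ≃ₗ[F] E => W.comap (g : V →ₗ[F] E))]
    · apply Finset.sum_const_nat
      intro U hU
      rw [← hconst U (hB U hU)]
      congr 1
      ext g
      simp only [Finset.mem_filter, Finset.mem_univ, true_and]
      constructor
      · exact fun h => h.2
      · exact fun h => ⟨h ▸ hU, h⟩
    · intro g hg
      simpa using hg
  have h1 := hgen (lev F V k) (fun S hS => mem_lev.1 hS)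
  rw [Finset.filter_true_of_mem, Finset.card_univ] at h1
  · rw [h1]
    have := hgen A hA
    rw [show (Finset.univ.filter (fun g : V ≃ₗ[F] E => W.comap (g : V →ₗ[F] E) ∈ A)).card = A.card * c by
      rw [← this]; congr]
    ring
  · intro g _
    rw [mem_lev, ← hW]
    have := LinearEquiv.finrank_map_eq g.symm W
    rw [← this, Submodule.map_equiv_eq_comap_symm]
    rfl

open Module in
lemma spread_ineq {F : Type*} [Field F] [Fintype F] {V : Type*} [AddCommGroup V] [Module F V] [Finite V]
    {d e : ℕ} (hd : 1 ≤ d) (hed : e ≤ d) (hV : finrank F V = d + e)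
    (A B : Finset (Submodule F V)) (hA : ∀ S ∈ A, finrank F S = e) (hB : ∀ S ∈ B, finrank F S = d)
    (hAA : ∀ S ∈ A, ∀ T ∈ A, S ⊓ T ≠ ⊥) (hAB : ∀ S ∈ A, ∀ T ∈ B, S ⊓ T ≠ ⊥) :
    (Fintype.card F : ℚ) ^ d * A.card + B.card ≤ gB (Fintype.card F) d e := by
  classical
  have hq : 2 ≤ Fintype.card F := Fintype.one_lt_card
  obtain ⟨p, hp⟩ := CharP.exists F
  have : Fact p.Prime := ⟨CharP.char_is_prime F p⟩
  have : NeZero d := ⟨by omega⟩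
  obtain ⟨K, _, _, _, hK⟩ : ∃ (K : Type) (_ : Field K) (_ : Finite K) (_ : Algebra F K), finrank F K = d :=
    ⟨FiniteField.Extension F p d, inferInstance, inferInstance, inferInstance,
      FiniteField.finrank_extension F p d⟩
  have : Module.Finite F K := .of_finite
  let := Fintype.ofFinite K
  have hKc : Fintype.card K = Fintype.card F ^ d := by
    rw [← hK, Module.card_eq_pow_finrank (K := F)]
  obtain ⟨ι, hι⟩ : ∃ f : (Fin e → F) →ₗ[F] K, Function.Injective f := by
    rw [← lift_rank_le_iff_exists_linearMap, ← finrank_eq_rank, ← finrank_eq_rank, hK]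
    simpa using hed
  let E := K × (Fin e → F)
  have hE : finrank F E = d + e := by simp [E, hK]
  let s : Option K → Submodule F E := fun o => match o with
    | none => LinearMap.range (LinearMap.inl F K (Fin e → F))
    | some a => LinearMap.range (LinearMap.prod ((LinearMap.mulLeft F a).comp ι) LinearMap.id)
  have hsnone : finrank F (s none) = d := by
    rw [LinearMap.finrank_range_of_inj LinearMap.inl_injective, hK]
  have hssome : ∀ a, finrank F (s (some a)) = e := by
    intro a
    rw [LinearMap.finrank_range_of_inj]
    · simp
    · intro x y h
      exact congrArg Prod.snd h
  have hd1 : ∀ a, s (some a) ⊓ s none = ⊥ := by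
    intro a
    rw [eq_bot_iff]
    rintro _ ⟨⟨x, rfl⟩, ⟨y, hy⟩⟩
    have h2 : 0 = x := congrArg Prod.snd hy
    subst h2
    simp
  have hd2 : ∀ a b, a ≠ b → s (some a) ⊓ s (some b) = ⊥ := by
    intro a b hab
    rw [eq_bot_iff]
    rintro _ ⟨⟨x, rfl⟩, ⟨y, hy⟩⟩
    have h2 : y = x := congrArg Prod.snd hy
    have h1 : b * ι y = a * ι x := congrArg Prod.fst hy
    subst h2
    rw [mul_eq_mul_right_iff] at h1
    rcases h1 with h1 | h1
    · exact absurd h1.symm hab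
    · have : y = 0 := hι (by simpa using h1)
      simp [this]
  have hfin : Finite (V ≃ₗ[F] E) := Finite.of_injective (fun g : V ≃ₗ[F] E => (g : V → E)) DFunLike.coe_injective
  let := Fintype.ofFinite (V ≃ₗ[F] E)
  have hX : 0 < Fintype.card (V ≃ₗ[F] E) := 
    Fintype.card_pos_iff.2 ⟨LinearEquiv.ofFinrankEq _ _ (by rw [hV, hE])⟩
  let Y : Option K → Finset (V ≃ₗ[F] E) := fun o => match o with
    | none => Finset.univ.filter (fun g : V ≃ₗ[F] E => (s none).comap (g : V →ₗ[F] E) ∈ B)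
    | some a => Finset.univ.filter (fun g : V ≃ₗ[F] E => (s (some a)).comap (g : V →ₗ[F] E) ∈ A)
  have hcomap : ∀ (g : V ≃ₗ[F] E) (P Q : Submodule F E), P ⊓ Q = ⊥ →
      P.comap (g : V →ₗ[F] E) ⊓ Q.comap (g : V →ₗ[F] E) = ⊥ := by
    intro g P Q h
    rw [← Submodule.comap_inf, h]
    simp
  have hdisj : ((Finset.univ : Finset (Option K)) : Set (Option K)).PairwiseDisjoint Y := by
    intro o _ o' _ hne
    rw [Function.onFun, Finset.disjoint_left]
    intro g hg hg'
    match o, o' with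
    | none, none => exact hne rfl
    | some a, none =>
      simp only [Y, Finset.mem_filter, Finset.mem_univ, true_and] at hg hg'
      exact hAB _ hg _ hg' (hcomap g _ _ (hd1 a))
    | none, some a =>
      simp only [Y, Finset.mem_filter, Finset.mem_univ, true_and] at hg hg'
      exact hAB _ hg' _ hg (hcomap g _ _ (hd1 a))
    | some a, some b =>
      simp only [Y, Finset.mem_filter, Finset.mem_univ, true_and] at hg hg'
      exact hAA _ hg _ hg' (hcomap g _ _ (hd2 a b (by rintro rfl; exact hne rfl)))
  have hle : ∑ o, (Y o).card ≤ Fintype.card (V ≃ₗ[F] E) := by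
    rw [← Finset.card_biUnion hdisj]
    exact Finset.card_le_univ _
  rw [Fintype.sum_option] at hle
  have hYn := avg (s none) hsnone B hB
  have hYs : ∀ a, A.card * Fintype.card (V ≃ₗ[F] E) = (lev F V e).card * (Y (some a)).card := 
    fun a => avg (s (some a)) (hssome a) A hA
  have hNe := card_lev (F := F) e d hV
  have hNd := card_lev (F := F) d e (V := V) (by omega)
  rw [gB_comm] at hNd
  have hsum : Fintype.card F ^ d * (A.card * Fintype.card (V ≃ₗ[F] E))
      = (lev F V e).card * ∑ a, (Y (some a)).card := by
    rw [Finset.mul_sum, ← Finset.sum_congr rfl (fun a _ => hYs a), Finset.sum_const, Finset.card_univ, hKc]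
    rfl
  have hYn' : B.card * Fintype.card (V ≃ₗ[F] E) = (lev F V d).card * (Y none).card := hYn
  have hXq : (0:ℚ) < Fintype.card (V ≃ₗ[F] E) := by exact_mod_cast hX
  have hle' : ((Y none).card : ℚ) + ((∑ a, (Y (some a)).card : ℕ) : ℚ) ≤ Fintype.card (V ≃ₗ[F] E) := by
    exact_mod_cast hle
  have hsum' : (Fintype.card F : ℚ) ^ d * (A.card * Fintype.card (V ≃ₗ[F] E))
      = (lev F V e).card * ((∑ a, (Y (some a)).card : ℕ) : ℚ) := by exact_mod_cast hsum
  have hYn'' : (B.card : ℚ) * Fintype.card (V ≃ₗ[F] E) = (lev F V d).card * (Y none).card := by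
    exact_mod_cast hYn'
  rw [hNe] at hsum'
  rw [hNd] at hYn''
  apply le_of_mul_le_mul_right _ hXq
  have := mul_le_mul_of_nonneg_left hle' (gB_pos hq d e).le
  linarith

/-- members of dimension `i` of the up-closure of `A` -/
noncomputable def upl {F : Type*} [Field F] {V : Type*} [AddCommGroup V] [Module F V] [Finite V]
    (A : Finset (Submodule F V)) (i : ℕ) : Finset (Submodule F V) :=
  open Classical in (lev F V i).filter (fun W => ∃ U ∈ A, U ≤ W)

open Module in
lemma mem_upl {F : Type*} [Field F] {V : Type*} [AddCommGroup V] [Module F V] [Finite V]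
    {A : Finset (Submodule F V)} {i : ℕ} {W : Submodule F V} :
    W ∈ upl A i ↔ finrank F W = i ∧ ∃ U ∈ A, U ≤ W := by
  simp [upl, mem_lev]

lemma upl_int {F : Type*} [Field F] {V : Type*} [AddCommGroup V] [Module F V] [Finite V]
    {A : Finset (Submodule F V)} {i : ℕ} (hAA : ∀ S ∈ A, ∀ T ∈ A, S ⊓ T ≠ ⊥) :
    ∀ S ∈ upl A i, ∀ T ∈ upl A i, S ⊓ T ≠ ⊥ := by
  intro S hS T hT h
  obtain ⟨-, S', hS', hle⟩ := mem_upl.1 hS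
  obtain ⟨-, T', hT', hle'⟩ := mem_upl.1 hT
  exact hAA S' hS' T' hT' (eq_bot_iff.2 (h ▸ inf_le_inf hle hle'))

open Module in
/-- Erdos-Ko-Rado for vector spaces. -/
lemma EKR {F : Type*} [Field F] [Fintype F] {V : Type*} [AddCommGroup V] [Module F V] [Finite V]
    {d e : ℕ} (hed : e + 1 ≤ d) (hV : finrank F V = d + (e + 1))
    (A : Finset (Submodule F V)) (hA : ∀ S ∈ A, finrank F S = e + 1)
    (hAA : ∀ S ∈ A, ∀ T ∈ A, S ⊓ T ≠ ⊥) :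
    (A.card : ℚ) ≤ gB (Fintype.card F) d e := by
  have hq : 2 ≤ Fintype.card F := Fintype.one_lt_card
  by_contra! hlt
  have claim : ∀ t, e + 1 + t ≤ d → gB (Fintype.card F) (d - t) (e + t) < (upl A (e+1+t)).card := by
    intro t
    induction t with
    | zero =>
      intro _
      refine hlt.trans_le ?_
      norm_cast
      apply Finset.card_le_card
      intro S hS
      exact mem_upl.2 ⟨hA S hS, S, hS, le_rfl⟩
    | succ t ih =>
      intro ht
      have ih := ih (by omega)
      obtain ⟨r, hr⟩ : ∃ r, d = r + 2 + t := ⟨d - t - 2, by omega⟩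
      by_contra! hc
      rw [show d - (t+1) = r + 1 by omega, show e + (t+1) = e + t + 1 by ring,
        show e + 1 + (t+1) = e + t + 1 + 1 by ring] at hc
      rw [show d - t = r+2 by omega, show e + 1 + t = e + t + 1 by ring] at ih
      have hkk := KK (e+t) r (by omega) (upl A (e+t+1)) (upl A (e+t+1+1)) (fun S hS => (mem_upl.1 hS).1)
        (fun S hS => (mem_upl.1 hS).1) (by
          intro S hS T hST hT
          obtain ⟨_, U, hU, hUS⟩ := mem_upl.1 hS
          exact mem_upl.2 ⟨hT, U, hU, hUS.trans hST⟩) hc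
      have hr2 := gB_ratio hq (r+1) (e+t)
      have h1 := mul_lt_mul_of_pos_right ih (qpow_pos hq (show 1 ≤ r+2 by omega))
      have h2 := mul_le_mul_of_nonneg_right hc (qpow_pos hq (show 1 ≤ e+t+1 by omega)).le
      rw [show r + 1 + 1 = r + 2 by ring] at hr2
      linarith
  have h1 := claim (d - (e+1)) (by omega)
  rw [show d - (d-(e+1)) = e+1 by omega, show e + (d-(e+1)) = d - 1 by omega,
    show e + 1 + (d-(e+1)) = d by omega] at h1
  have h2 := spread_ineq (by omega) hed hV A (upl A d) hA (fun S hS => (mem_upl.1 hS).1) hAA (by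
    intro S hS T hT h
    obtain ⟨-, T', hT', hle'⟩ := mem_upl.1 hT
    exact hAA S hS T' hT' (eq_bot_iff.2 (h ▸ inf_le_inf le_rfl hle')))
  have h3 := gB_pascal hq (d-1) e
  rw [show d - 1 + 1 = d by omega] at h3
  rw [gB_comm] at h1
  have hq0 : (0:ℚ) < Fintype.card F := by exact_mod_cast Fintype.card_pos
  have h4 := mul_lt_mul_of_pos_left hlt (pow_pos hq0 d)
  linarith

open Module in
/-- Wang's LYM inequality, inductive form. -/
lemma LYM_aux {F : Type*} [Field F] [Fintype F] {V : Type*} [AddCommGroup V] [Module F V] [Finite V]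
    {n : ℕ} (hV : finrank F V = n) (A : Finset (Submodule F V))
    (hpos : ∀ S ∈ A, 1 ≤ finrank F S)
    (hAA : ∀ S ∈ A, ∀ T ∈ A, S ⊓ T ≠ ⊥) (hanti : ∀ S ∈ A, ∀ T ∈ A, S ≤ T → S = T) (i : ℕ)
    (hi : 2 * (i + 1) ≤ n) :
    ∑ j ∈ Finset.Icc 1 (i+1), ((A.filter (fun W : Submodule F V => finrank F W = j)).card : ℚ) /
        gB (Fintype.card F) (n - j) (j - 1)
      ≤ ((upl A (i+1)).card : ℚ) / gB (Fintype.card F) (n - (i+1)) i := by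
  classical
  have hq : 2 ≤ Fintype.card F := Fintype.one_lt_card
  induction i with
  | zero =>
    rw [show Finset.Icc 1 (0+1) = {1} from rfl, Finset.sum_singleton]
    apply div_le_div_of_nonneg_right _ (gB_pos hq _ _).le
    norm_cast
    apply Finset.card_le_card
    intro S hS
    rw [Finset.mem_filter] at hS
    exact mem_upl.2 ⟨hS.2, S, hS.1, le_rfl⟩
  | succ i ih =>
    have ih := ih (by omega)
    rw [Finset.sum_Icc_succ_top (by omega)]
    obtain ⟨r, hr⟩ : ∃ r, n = r + 1 + (i + 1) + 1 := ⟨n - i - 3, by omega⟩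
    rw [show n - (i+1) = r + 2 by omega] at ih
    rw [show n - (i+1+1) = r+1 by omega, show i + 1 + 1 - 1 = i + 1 by omega]
    set N := upl (upl A (i+1)) (i+1+1) with hN
    have hNc : (N.card : ℚ) ≤ gB (Fintype.card F) (r+1) (i+1) :=
      EKR (by omega) (by omega) N (fun S hS => (mem_upl.1 hS).1) (upl_int (upl_int hAA))
    have hkk := KK i r (by omega) (upl A (i+1)) N (fun S hS => (mem_upl.1 hS).1)
      (fun S hS => (mem_upl.1 hS).1) (fun S hS T hST hT => mem_upl.2 ⟨hT, S, hS, hST⟩) hNc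
    have hratio := gB_ratio hq (r+1) i
    have hb1 := gB_pos hq (r+2) i
    have hb2 := gB_pos hq (r+1) (i+1)
    have hp := qpow_pos hq (show 1 ≤ r+2 by omega)
    have hstep : ((upl A (i+1)).card : ℚ) / gB (Fintype.card F) (r+2) i 
        ≤ (N.card : ℚ) / gB (Fintype.card F) (r+1) (i+1) := by
      rw [div_le_div_iff₀ hb1 hb2]
      apply le_of_mul_le_mul_right _ hp
      have h1 := mul_le_mul_of_nonneg_right hkk hb2.le
      rw [show r + 1 + 1 = r + 2 by ring] at hratio
      calc _ = ((upl A (i+1)).card : ℚ) * ((Fintype.card F : ℚ) ^ (r+2) - 1) * gB (Fintype.card F) (r+1) (i+1) := by ring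
        _ ≤ _ := h1
        _ = N.card * (gB (Fintype.card F) (r+1) (i+1) * ((Fintype.card F : ℚ) ^ (i+1) - 1)) := by ring
        _ = _ := by rw [← hratio]; ring
    have hcard : (N.card : ℚ) + (A.filter (fun W : Submodule F V => finrank F W = i+1+1)).card ≤ (upl A (i+1+1)).card := by
      norm_cast
      rw [← Finset.card_union_of_disjoint]
      · apply Finset.card_le_card
        intro S hS
        rcases Finset.mem_union.1 hS with hS | hS
        · obtain ⟨h, T, hT, hTS⟩ := mem_upl.1 hS
          obtain ⟨-, U, hU, hUT⟩ := mem_upl.1 hT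
          exact mem_upl.2 ⟨h, U, hU, hUT.trans hTS⟩
        · rw [Finset.mem_filter] at hS
          exact mem_upl.2 ⟨hS.2, S, hS.1, le_rfl⟩
      · rw [Finset.disjoint_left]
        intro S hS hS2
        rw [Finset.mem_filter] at hS2
        obtain ⟨h, T, hT, hTS⟩ := mem_upl.1 hS
        obtain ⟨hT1, U, hU, hUT⟩ := mem_upl.1 hT
        have hUS := hanti U hU S hS2.1 (hUT.trans hTS)
        subst hUS
        have := Submodule.finrank_mono hUT
        omega
    calc _ ≤ (N.card : ℚ) / gB (Fintype.card F) (r+1) (i+1) + 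
          ((A.filter (fun W : Submodule F V => finrank F W = i+1+1)).card : ℚ) / gB (Fintype.card F) (r+1) (i+1) := by
          linarith
      _ ≤ _ := by
          rw [← add_div]
          exact div_le_div_of_nonneg_right hcard hb2.le

open Module in
lemma LYM_antichain {F : Type*} [Field F] [Fintype F] {V : Type*} [AddCommGroup V] [Module F V] [Finite V]
    {n : ℕ} (hV : finrank F V = n) (A : Finset (Submodule F V))
    (hpos : ∀ S ∈ A, 1 ≤ finrank F S)
    (hAA : ∀ S ∈ A, ∀ T ∈ A, S ⊓ T ≠ ⊥) (hanti : ∀ S ∈ A, ∀ T ∈ A, S ≤ T → S = T) :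
    ∑ j ∈ Finset.Icc 1 (n/2), ((A.filter (fun W : Submodule F V => finrank F W = j)).card : ℚ) /
        gB (Fintype.card F) (n - j) (j - 1) ≤ 1 := by
  have hq : 2 ≤ Fintype.card F := Fintype.one_lt_card
  rcases Nat.eq_zero_or_pos (n/2) with h | h
  · simp [h]
  · obtain ⟨i, hi⟩ : ∃ i, n / 2 = i + 1 := ⟨n/2 - 1, by omega⟩
    rw [hi]
    refine (LYM_aux hV A hpos hAA hanti i (by omega)).trans ?_
    rw [div_le_one (gB_pos hq _ _)]
    exact EKR (by omega) (by omega) _ (fun S hS => (mem_upl.1 hS).1) (upl_int hAA)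

open Module in
lemma LYM_sperner {F : Type*} [Field F] [Fintype F] {V : Type*} [AddCommGroup V] [Module F V] [Finite V]
    {n : ℕ} (hV : finrank F V = n) (k : ℕ) (A : Finset (Submodule F V))
    (hpos : ∀ S ∈ A, 1 ≤ finrank F S)
    (hAA : ∀ S ∈ A, ∀ T ∈ A, S ⊓ T ≠ ⊥)
    (hSperner : ∀ c : Fin (k + 1) → Submodule F V, (∀ i, c i ∈ A) → ¬ StrictMono c) :
    ∑ j ∈ Finset.Icc 1 (n/2), ((A.filter (fun W : Submodule F V => finrank F W = j)).card : ℚ) /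
        gB (Fintype.card F) (n - j) (j - 1) ≤ k := by
  classical
  induction k generalizing A with
  | zero =>
    have : A = ∅ := by
      rw [Finset.eq_empty_iff_forall_notMem]
      intro S hS
      exact hSperner (fun _ => S) (fun _ => hS) (by
        intro a b hab
        omega)
    simp [this]
  | succ k ih =>
    set M := A.filter (fun S => ∀ T ∈ A, ¬ T < S) with hM
    set R := A.filter (fun S => ¬ ∀ T ∈ A, ¬ T < S) with hR
    have h1 := ih R (fun S hS => hpos S (Finset.mem_filter.1 hS).1)
      (fun S hS T hT => hAA S (Finset.mem_filter.1 hS).1 T (Finset.mem_filter.1 hT).1) (by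
        intro c hc hmono
        have h0 := (Finset.mem_filter.1 (hc 0)).2
        push Not at h0
        obtain ⟨T, hT, hlt⟩ := h0
        refine hSperner (Fin.cons T c) ?_ ?_
        · intro i
          refine Fin.cases ?_ ?_ i
          · simpa using hT
          · intro i; simpa using (Finset.mem_filter.1 (hc i)).1
        · rw [Fin.strictMono_iff_lt_succ]
          intro i
          refine Fin.cases ?_ ?_ i
          · simpa using hlt
          · intro i
            have : (i.succ : Fin (k+1)).castSucc = i.castSucc.succ := rfl
            rw [this, Fin.cons_succ, Fin.cons_succ]
            exact hmono Fin.castSucc_lt_succ)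
    have h2 := LYM_antichain hV M (fun S hS => hpos S (Finset.mem_filter.1 hS).1)
      (fun S hS T hT => hAA S (Finset.mem_filter.1 hS).1 T (Finset.mem_filter.1 hT).1) (by
        intro S hS T hT hST
        by_contra hne
        exact (Finset.mem_filter.1 hT).2 S (Finset.mem_filter.1 hS).1 (lt_of_le_of_ne hST hne))
    have h3 : ∀ j, ((A.filter (fun W : Submodule F V => finrank F W = j)).card : ℚ) =
       (M.filter (fun W : Submodule F V => finrank F W = j)).card + (R.filter (fun W : Submodule F V => finrank F W = j)).card := by
      intro j
      norm_cast
      rw [hM, hR, ← Finset.card_filter_add_card_filter_not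
        (s := A.filter (fun W : Submodule F V => finrank F W = j)) (fun S => ∀ T ∈ A, ¬ T < S)]
      congr 2 <;> (ext W; simp only [Finset.mem_filter]; tauto)
    simp only [h3, add_div, Finset.sum_add_distrib]
    push_cast
    linarith

/-- LYM-type inequality for an intersecting `k`-Sperner family of subspaces of
`F_q^n` all of whose members have dimension at most `⌊n/2⌋`. -/
theorem intersecting_kSperner_LYM
    (F : Type*) [Field F] [Fintype F] (n k : ℕ) (hk : 1 ≤ k)
    (V : Finset (Submodule F (Fin n → F)))
    (hint : ∀ U ∈ V, ∀ W ∈ V, U ≠ W → U ⊓ W ≠ ⊥)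
    (hSperner : ∀ c : Fin (k + 1) → Submodule F (Fin n → F),
      (∀ i, c i ∈ V) → ¬ StrictMono c)
    (hdim : ∀ W ∈ V, Module.finrank F W ≤ n / 2) :
    ∑ j ∈ Finset.Icc 1 (n / 2),
        ((V.filter (fun W : Submodule F (Fin n → F) => Module.finrank F W = j)).card : ℚ) /
          gaussBinom (Fintype.card F) (n - 1) (j - 1) ≤ (k : ℚ) := by
  classical
  have hq : 2 ≤ Fintype.card F := Fintype.one_lt_card
  have h := LYM_sperner (F := F) (V := Fin n → F) (n := n) (by simp) k
    (V.filter (fun W : Submodule F (Fin n → F) => 1 ≤ Module.finrank F W))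
    (fun S hS => (Finset.mem_filter.1 hS).2) (by
      intro S hS T hT
      rw [Finset.mem_filter] at hS hT
      by_cases hST : S = T
      · subst hST
        rw [inf_idem]
        rintro rfl
        simp at hS
      · exact hint S hS.1 T hT.1 hST)
    (fun c hc => hSperner c (fun i => (Finset.mem_filter.1 (hc i)).1))
  refine le_trans (le_of_eq ?_) h
  apply Finset.sum_congr rfl
  intro j hj
  rw [Finset.mem_Icc] at hj
  rw [← gaussBinom_eq hq, show n - j + (j - 1) = n - 1 by omega, Finset.filter_filter]
  congr 3
  apply Finset.filter_congr
  intro W _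
  omega
end
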